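/- For any n×n dual quaternion Hermitian matrix A and any n×n dual quaternion unitary matrix U, Cdet(U*AU) = Cdet(A). -/

import Mathlib

/-!
Why the Chen determinant of a Hermitian matrix is a unitary invariant.

For Hermitian `A`, reversing a cycle of a permutation conjugates the corresponding cycle product.
Averaging over both orientations of every cycle therefore replaces each cycle product in `Cdet A`
by its real part, a dual number (`Cdet_eq_sum_weight`). Real parts are central and tracial, so
`Cdet A = (-1)^n Σ_σ Π_c (-Re A_c)`, with `c` running over the cycles of `σ` and `A_c` the product
of the entries along `c`; neither the starting points nor the order of the cycles matter
(`weight_eq_prod`).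

Apply the same sum to the matrices `A_f = (A (f i) (f j))` for all functions `f` on the indices.
* If `f` is a bijection, relabelling gives the value for `A` (`sum_weight_submatrix`).
* If `f x = f y` with `x ≠ y`, the value is `0` (`sum_weight_eq_zero`). Multiplication by the
  transposition of `x` and `y` pairs the permutations in which `x` and `y` lie on different cycles,
  with products `p` and `q`, with those in which these cycles are merged, with product `q p`;
  reversing the cycle through `y` also yields `q* p`, and `Re (q p) + Re (q* p) = 2 Re p Re q`.
Hence `n!` times the sum for `A` is the sum over all `f`. There the indices are unrestricted, and
each permutation contributes `Π_c (-Re tr A^{|c|})` (`sum_weight_functions`), which depends only on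
the real traces of the powers of `A` and is unchanged under `A ↦ U* A U`.
-/

/-!
Formalization background for "Moore Determinant of Dual Quaternion Hermitian Matrices"
(Cui, Qi, Song, Wang).

A dual quaternion is `q = q_s + q_d ε` with `q_s, q_d` quaternions, `ε² = 0`; it is modeled
by `DualNumber (Quaternion ℝ)`.
-/

open Quaternion Matrix

noncomputable section

/-- Dual quaternions: dual numbers over the quaternions. -/
abbrev DualQuaternion : Type := DualNumber (Quaternion ℝ)

namespace DQPaper

/-- Conjugation of dual quaternions: `(q_s + q_d ε)* = q_s* + q_d* ε`. -/
instance : Star DualQuaternion := ⟨fun q => (star q.fst, star q.snd)⟩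

/-- The real part of a dual quaternion `q = q_s + q_d ε`, as the dual number
`Re(q_s) + Re(q_d) ε`. -/
def dqRe (q : DualQuaternion) : DualNumber ℝ := (q.fst.re, q.snd.re)

/-- The embedding of the dual numbers into the dual quaternions. -/
def toDQ (d : DualNumber ℝ) : DualQuaternion := ((d.fst : ℍ[ℝ]), (d.snd : ℍ[ℝ]))

/-- A dual quaternion is a dual number if its standard and dual parts are both real. -/
def IsDualNum (q : DualQuaternion) : Prop := ∃ d : DualNumber ℝ, q = toDQ d

/-- A dual number `a + b ε` is nonnegative if `a > 0`, or `a = 0` and `b ≥ 0`. -/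
def DNNonneg (u : DualNumber ℝ) : Prop := 0 < u.fst ∨ (u.fst = 0 ∧ 0 ≤ u.snd)

/-- The order on dual numbers: `u ≤ v` iff `v - u` is nonnegative. -/
def dnLe (u v : DualNumber ℝ) : Prop := DNNonneg (v - u)

open Classical in
/-- The magnitude of a dual quaternion `p = p_s + p_d ε`, as a dual number:
`|p| = |p_s| + ((p_s* p_d + p_d* p_s)/(2|p_s|)) ε` if `p_s ≠ 0`, and `|p| = |p_d| ε`
otherwise. -/
def dqMag (p : DualQuaternion) : DualNumber ℝ :=
  if p.fst = 0 then (0, ‖p.snd‖)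
  else (‖p.fst‖, ((star p.fst * p.snd + star p.snd * p.fst).re) / (2 * ‖p.fst‖))

/-- The cycle of the permutation `σ` containing `i`, listed as `[i, σ i, σ² i, …]`. -/
def cycleList {n : ℕ} (σ : Equiv.Perm (Fin n)) (i : Fin n) : List (Fin n) :=
  i :: (((List.range n).map (fun k => (σ ^ (k + 1)) i)).takeWhile (fun j => decide (j ≠ i)))

/-- The leaders (largest element of each cycle) of `σ`, listed in decreasing order;
this is the normalization used in the Chen determinant. -/
def chenLeaders {n : ℕ} (σ : Equiv.Perm (Fin n)) : List (Fin n) :=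
  ((List.finRange n).filter (fun i => (cycleList σ i).all (fun j => decide (j ≤ i)))).reverse

/-- All of `Fin n` listed in the normalized cycle order of the Chen determinant:
each cycle is led by its largest element, and cycles are ordered by decreasing leaders
(so the first cycle contains the last index). -/
def chenOrder {n : ℕ} (σ : Equiv.Perm (Fin n)) : List (Fin n) :=
  ((chenLeaders σ).map (cycleList σ)).flatten

/-- The Chen determinant of a square matrix over a (possibly noncommutative) ring:
`Cdet A = Σ_σ (−1)^{n−r} a_σ`, where `σ` runs over all permutations written in the
normalized cycle form with `r` disjoint cycles, and `a_σ` is the ordered product of the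
entries `A i (σ i)` along the normalized cycle order. -/
def Cdet {n : ℕ} {R : Type*} [Ring R] (A : Matrix (Fin n) (Fin n) R) : R :=
  ∑ σ : Equiv.Perm (Fin n),
    (-1 : R) ^ (n - (chenLeaders σ).length) * ((chenOrder σ).map (fun i => A i (σ i))).prod

/-- The leaders (smallest element of each cycle) of `σ`, listed in decreasing order;
this is the normalization used in the Moore determinant. -/
def mooreLeaders {n : ℕ} (σ : Equiv.Perm (Fin n)) : List (Fin n) :=
  ((List.finRange n).filter (fun i => (cycleList σ i).all (fun j => decide (i ≤ j)))).reverse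

/-- All of `Fin n` listed in the normalized cycle order of the Moore determinant:
each cycle is led by its smallest element, and cycles are ordered by decreasing leaders. -/
def mooreOrder {n : ℕ} (σ : Equiv.Perm (Fin n)) : List (Fin n) :=
  ((mooreLeaders σ).map (cycleList σ)).flatten

/-- The Moore determinant of a square matrix over a (possibly noncommutative) ring:
`Mdet A = Σ_σ s(σ) a_σ`, where `s(σ)` is the sign of `σ` and `a_σ` is the ordered product
of the entries `A i (σ i)` along the normalized (Moore) cycle order. -/
def Mdet {n : ℕ} {R : Type*} [Ring R] (A : Matrix (Fin n) (Fin n) R) : R :=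
  ∑ σ : Equiv.Perm (Fin n),
    ((Equiv.Perm.sign σ : ℤ) : R) * ((mooreOrder σ).map (fun i => A i (σ i))).prod

/-- The switching matrix `P_{ij}`: the identity matrix with rows `i` and `j` interchanged. -/
def switchMatrix {R : Type*} [Ring R] {n : ℕ} (i j : Fin n) : Matrix (Fin n) (Fin n) R :=
  Matrix.of fun k l =>
    if (k = i ∧ l = j) ∨ (k = j ∧ l = i) ∨ (k = l ∧ k ≠ i ∧ k ≠ j) then 1 else 0

/-- The multiplication matrix `P_{i;c}`: the identity matrix with the `(i,i)` entry
replaced by `c`. -/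
def mulMatrix {R : Type*} [Ring R] {n : ℕ} (i : Fin n) (c : R) : Matrix (Fin n) (Fin n) R :=
  Matrix.of fun k l => if k = l then (if k = i then c else 1) else 0

/-- The addition matrix `P_{ij;c}`: the identity matrix with an extra entry `c` in
position `(j,i)`, so that `P_{ij;c} * A` adds `c` times row `i` of `A` to row `j`. -/
def addMatrix {R : Type*} [Ring R] {n : ℕ} (i j : Fin n) (c : R) : Matrix (Fin n) (Fin n) R :=
  Matrix.of fun k l => (if k = l then 1 else 0) + (if k = j ∧ l = i then c else 0)

/-- The product `A i₁ i₂ * A i₂ i₃ * ⋯ * A i_{m-1} i_m` of matrix entries along a chain of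
indices `[i₁, …, i_m]`; applied to a closed chain `[i₁, …, i_m, i₁]` it gives the cycle
product `⟨i₁ … i_m i₁⟩ = a_{i₁ i₂} ⋯ a_{i_m i₁}`. -/
def chainProd {n : ℕ} (A : Matrix (Fin n) (Fin n) DualQuaternion) :
    List (Fin n) → DualQuaternion
  | [] => 1
  | [_] => 1
  | i :: j :: rest => A i j * chainProd A (j :: rest)

/-- A dual number `lam` is a (right) eigenvalue of the dual quaternion matrix `A` if
`A x = x lam` for some appreciable dual quaternion vector `x` (i.e. one whose standard
part is nonzero). -/
def IsEigenvalue {n : ℕ} (A : Matrix (Fin n) (Fin n) DualQuaternion)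
    (lam : DualNumber ℝ) : Prop :=
  ∃ x : Fin n → DualQuaternion,
    (fun i => (x i).fst) ≠ 0 ∧ A.mulVec x = fun i => x i * toDQ lam

/-- The dual quaternion Hermitian matrix `A` has the dual numbers `lam 1, …, lam n` as its
eigenvalues (counted with multiplicity), via the unitary diagonalization `U A U* = diag(lam)`
of Qi and Luo (2023). -/
def HasEigenvalues {n : ℕ} (A : Matrix (Fin n) (Fin n) DualQuaternion)
    (lam : Fin n → DualNumber ℝ) : Prop :=
  ∃ U : Matrix (Fin n) (Fin n) DualQuaternion,
    Uᴴ * U = 1 ∧ U * A * Uᴴ = Matrix.diagonal fun i => toDQ (lam i)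

open Function Equiv.Perm

/-! ### Products along cycles -/

section Cycles

variable {n : ℕ} {R : Type*} [Ring R]

lemma perm_inv_apply (σ : Equiv.Perm (Fin n)) (i : Fin n) : σ⁻¹ (σ i) = i :=
  σ.symm_apply_apply i

lemma perm_apply_inv (σ : Equiv.Perm (Fin n)) (i : Fin n) : σ (σ⁻¹ i) = i :=
  σ.apply_symm_apply i

/-- The ordered product `B i (σ i) * B (σ i) (σ² i) * ⋯` of `m` factors along the orbit of `i`. -/
def pathProd (σ : Equiv.Perm (Fin n)) (B : Matrix (Fin n) (Fin n) R) (i : Fin n) (m : ℕ) : R :=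
  ((List.range m).map fun k => B ((σ ^ k) i) ((σ ^ (k + 1)) i)).prod

/-- The product of the entries of `B` along the cycle of `σ` through `i`, started at `i`. -/
def cycProd (σ : Equiv.Perm (Fin n)) (B : Matrix (Fin n) (Fin n) R) (i : Fin n) : R :=
  pathProd σ B i (minimalPeriod σ i)

lemma pathProd_succ (σ : Equiv.Perm (Fin n)) (B : Matrix (Fin n) (Fin n) R) (i : Fin n) (m : ℕ) :
    pathProd σ B i (m + 1) = pathProd σ B i m * B ((σ ^ m) i) ((σ ^ (m + 1)) i) := by
  simp [pathProd, List.range_succ]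

lemma pathProd_add (σ : Equiv.Perm (Fin n)) (B : Matrix (Fin n) (Fin n) R) (i : Fin n)
    (a b : ℕ) : pathProd σ B i (a + b) = pathProd σ B i a * pathProd σ B ((σ ^ a) i) b := by
  induction b with
  | zero => simp [pathProd]
  | succ b ih =>
    rw [← add_assoc, pathProd_succ, ih, pathProd_succ, mul_assoc, ← Equiv.Perm.mul_apply,
      ← Equiv.Perm.mul_apply, ← pow_add, ← pow_add]
    congr 5 <;> omega

lemma pathProd_congr {σ τ : Equiv.Perm (Fin n)} {B B' : Matrix (Fin n) (Fin n) R} {i j : Fin n}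
    {m : ℕ} (h : ∀ k < m, B ((σ ^ k) i) ((σ ^ (k + 1)) i) = B' ((τ ^ k) j) ((τ ^ (k + 1)) j)) :
    pathProd σ B i m = pathProd τ B' j m := by
  unfold pathProd
  congr 1
  exact List.map_congr_left fun k hk => h k (List.mem_range.1 hk)

lemma period_pos (σ : Equiv.Perm (Fin n)) (i : Fin n) : 0 < minimalPeriod σ i :=
  minimalPeriod_pos_of_mem_periodicPts
    ((Finite.injective_iff_bijective.1 σ.injective).injective.mem_periodicPts i)

lemma isPeriodicPt_iff_pow (σ : Equiv.Perm (Fin n)) (i : Fin n) (m : ℕ) :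
    IsPeriodicPt σ m i ↔ (σ ^ m) i = i := by
  rw [IsPeriodicPt, IsFixedPt, Equiv.Perm.iterate_eq_pow]

lemma pow_period (σ : Equiv.Perm (Fin n)) (i : Fin n) : (σ ^ minimalPeriod σ i) i = i :=
  (isPeriodicPt_iff_pow σ i _).1 (isPeriodicPt_minimalPeriod σ i)

lemma pow_ne_of_lt_period {σ : Equiv.Perm (Fin n)} {i : Fin n} {k : ℕ} (hk : 0 < k)
    (hk' : k < minimalPeriod σ i) : (σ ^ k) i ≠ i := fun h =>
  absurd (((isPeriodicPt_iff_pow σ i k).2 h).minimalPeriod_le hk) (by omega)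

lemma period_eq {σ : Equiv.Perm (Fin n)} {i : Fin n} {m : ℕ} (hm : 0 < m) (h : (σ ^ m) i = i)
    (h' : ∀ k, 0 < k → k < m → (σ ^ k) i ≠ i) : minimalPeriod σ i = m := by
  apply le_antisymm (((isPeriodicPt_iff_pow σ i m).2 h).minimalPeriod_le hm)
  by_contra hlt
  exact h' _ (period_pos σ i) (by omega) (pow_period σ i)

lemma period_le (σ : Equiv.Perm (Fin n)) (i : Fin n) : minimalPeriod σ i ≤ n := by
  have : Function.Injective (fun k : Fin (minimalPeriod σ i) => σ^[k.1] i) := fun a b h =>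
    Fin.ext ((iterate_eq_iterate_iff_of_lt_minimalPeriod a.2 b.2).1 h)
  simpa using Fintype.card_le_of_injective _ this

lemma sameCycle_iff_pow {σ : Equiv.Perm (Fin n)} {i j : Fin n} :
    SameCycle σ i j ↔ ∃ k : ℕ, (σ ^ k) i = j :=
  ⟨fun h => h.exists_nat_pow_eq, fun ⟨k, hk⟩ => ⟨k, by simpa using hk⟩⟩

lemma sameCycle_iff_pow_lt {σ : Equiv.Perm (Fin n)} {i j : Fin n} :
    SameCycle σ i j ↔ ∃ k < minimalPeriod σ i, (σ ^ k) i = j := by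
  rw [sameCycle_iff_pow]
  constructor
  · rintro ⟨k, hk⟩
    refine ⟨k % minimalPeriod σ i, Nat.mod_lt _ (period_pos σ i), ?_⟩
    rw [← Equiv.Perm.iterate_eq_pow, iterate_mod_minimalPeriod_eq, Equiv.Perm.iterate_eq_pow, hk]
  · rintro ⟨k, -, hk⟩
    exact ⟨k, hk⟩

lemma pow_eq_of_agree {σ τ : Equiv.Perm (Fin n)} {i : Fin n}
    (h : ∀ j, SameCycle τ i j → σ j = τ j) (k : ℕ) : (σ ^ k) i = (τ ^ k) i := by
  induction k with
  | zero => rfl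
  | succ k ih =>
    rw [pow_succ', pow_succ', Equiv.Perm.mul_apply, Equiv.Perm.mul_apply, ih]
    exact h _ (sameCycle_iff_pow.2 ⟨k, rfl⟩)

lemma sameCycle_of_agree {σ τ : Equiv.Perm (Fin n)} {i : Fin n}
    (h : ∀ j, SameCycle τ i j → σ j = τ j) (j : Fin n) : SameCycle σ i j ↔ SameCycle τ i j := by
  simp only [sameCycle_iff_pow, pow_eq_of_agree h]

lemma cycProd_of_agree {σ τ : Equiv.Perm (Fin n)} {i : Fin n}
    (h : ∀ j, SameCycle τ i j → σ j = τ j) (B : Matrix (Fin n) (Fin n) R) :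
    cycProd σ B i = cycProd τ B i := by
  have hp : minimalPeriod σ i = minimalPeriod τ i := by
    rw [minimalPeriod_eq_minimalPeriod_iff]
    intro m
    simp only [isPeriodicPt_iff_pow, pow_eq_of_agree h]
  unfold cycProd
  rw [hp]
  exact pathProd_congr fun k _ => by rw [pow_eq_of_agree h, pow_eq_of_agree h]

lemma period_apply (σ : Equiv.Perm (Fin n)) (i : Fin n) :
    minimalPeriod σ (σ i) = minimalPeriod σ i := by
  rw [minimalPeriod_eq_minimalPeriod_iff]
  intro m
  rw [isPeriodicPt_iff_pow, isPeriodicPt_iff_pow, ← Equiv.Perm.mul_apply, ← pow_succ, pow_succ',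
    Equiv.Perm.mul_apply, σ.injective.eq_iff]

/-- Moving the starting point of a cycle one step rotates the cycle product. -/
lemma cycProd_rotate (σ : Equiv.Perm (Fin n)) (B : Matrix (Fin n) (Fin n) R) (i : Fin n) :
    ∃ u v : R, cycProd σ B i = u * v ∧ cycProd σ B (σ i) = v * u := by
  obtain ⟨m, hm⟩ : ∃ m, minimalPeriod σ i = m + 1 :=
    ⟨minimalPeriod σ i - 1, by have := period_pos σ i; omega⟩
  refine ⟨pathProd σ B i 1, pathProd σ B (σ i) m, ?_, ?_⟩
  · rw [cycProd, hm, add_comm, pathProd_add, pow_one]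
  · rw [cycProd, period_apply, hm, pathProd_succ]
    congr 1
    have h1 := pow_period σ i
    rw [hm] at h1
    have h2 : (σ ^ m) (σ i) = i := by rw [← Equiv.Perm.mul_apply, ← pow_succ, h1]
    have h3 : (σ ^ (m + 1)) (σ i) = σ i := by
      rw [pow_succ', Equiv.Perm.mul_apply, h2]
    simp [pathProd, h2, h3]

lemma cycProd_conj (σ π : Equiv.Perm (Fin n)) (B : Matrix (Fin n) (Fin n) R) (i : Fin n) :
    cycProd (π * σ * π⁻¹) B (π i) = cycProd σ (B.submatrix π π) i := by
  have hpow : ∀ k, ((π * σ * π⁻¹) ^ k) (π i) = π ((σ ^ k) i) := by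
    intro k
    rw [conj_pow]
    simp
  have hp : minimalPeriod (π * σ * π⁻¹) (π i) = minimalPeriod σ i := by
    rw [minimalPeriod_eq_minimalPeriod_iff]
    intro m
    rw [isPeriodicPt_iff_pow, isPeriodicPt_iff_pow, hpow, π.injective.eq_iff]
  unfold cycProd
  rw [hp]
  exact pathProd_congr fun k _ => by rw [hpow, hpow]; rfl

lemma star_pathProd [StarRing R] (σ : Equiv.Perm (Fin n)) {B : Matrix (Fin n) (Fin n) R}
    (hB : Bᴴ = B) (i : Fin n) (m : ℕ) :
    star (pathProd σ B i m) = pathProd σ⁻¹ B ((σ ^ m) i) m := by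
  have hs : ∀ a b, star (B a b) = B b a := fun a b => by
    conv_rhs => rw [← hB]
    rfl
  induction m with
  | zero => simp [pathProd]
  | succ m ih =>
    rw [pathProd_succ, star_mul, ih, hs, add_comm m 1, pathProd_add]
    simp only [pow_one, pow_add, Equiv.Perm.mul_apply, perm_inv_apply]
    congr 1
    simp only [pathProd, List.range_one, List.map_cons, List.map_nil, List.prod_singleton,
      zero_add, pow_one, perm_inv_apply]
    rfl

lemma cycProd_inv [StarRing R] (σ : Equiv.Perm (Fin n)) {B : Matrix (Fin n) (Fin n) R}
    (hB : Bᴴ = B) (i : Fin n) : cycProd σ⁻¹ B i = star (cycProd σ B i) := by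
  have hp : minimalPeriod (σ⁻¹ : Equiv.Perm (Fin n)) i = minimalPeriod σ i := by
    rw [minimalPeriod_eq_minimalPeriod_iff]
    intro m
    rw [isPeriodicPt_iff_pow, isPeriodicPt_iff_pow, inv_pow, Equiv.Perm.inv_eq_iff_eq, eq_comm]
  rw [cycProd, cycProd, hp, star_pathProd σ hB, pow_period]

/-! ### Reversing a cycle -/

/-- The permutation obtained from `σ` by reversing the direction of the cycle through `k`. -/
def revCycle (σ : Equiv.Perm (Fin n)) (k : Fin n) : Equiv.Perm (Fin n) :=
  σ * cycleOf σ⁻¹ k * cycleOf σ⁻¹ k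

lemma revCycle_apply_same {σ : Equiv.Perm (Fin n)} {k j : Fin n} (h : SameCycle σ k j) :
    revCycle σ k j = σ⁻¹ j := by
  have h' : SameCycle σ⁻¹ k j := sameCycle_inv.2 h
  have h'' : SameCycle σ⁻¹ k (σ⁻¹ j) := sameCycle_apply_right.2 h'
  simp only [revCycle, Equiv.Perm.mul_apply, cycleOf_apply, if_pos h', if_pos h'',
    perm_apply_inv]

lemma revCycle_apply_other {σ : Equiv.Perm (Fin n)} {k j : Fin n} (h : ¬ SameCycle σ k j) :
    revCycle σ k j = σ j := by
  have h' : ¬ SameCycle σ⁻¹ k j := fun h' => h (sameCycle_inv.1 h')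
  simp only [revCycle, Equiv.Perm.mul_apply, cycleOf_apply, if_neg h']

lemma revCycle_agree_same {σ : Equiv.Perm (Fin n)} {k i : Fin n} (h : SameCycle σ k i) (j : Fin n)
    (hj : SameCycle σ⁻¹ i j) : revCycle σ k j = σ⁻¹ j :=
  revCycle_apply_same (h.trans (sameCycle_inv.1 hj))

lemma revCycle_agree_other {σ : Equiv.Perm (Fin n)} {k i : Fin n} (h : ¬ SameCycle σ k i)
    (j : Fin n) (hj : SameCycle σ i j) : revCycle σ k j = σ j :=
  revCycle_apply_other fun h' => h (h'.trans hj.symm)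

lemma sameCycle_revCycle {σ : Equiv.Perm (Fin n)} {k i j : Fin n} :
    SameCycle (revCycle σ k) i j ↔ SameCycle σ i j := by
  by_cases h : SameCycle σ k i
  · rw [sameCycle_of_agree (revCycle_agree_same h), sameCycle_inv]
  · exact sameCycle_of_agree (revCycle_agree_other h) j

lemma cycProd_revCycle_same [StarRing R] {σ : Equiv.Perm (Fin n)} {k i : Fin n}
    (h : SameCycle σ k i) {B : Matrix (Fin n) (Fin n) R} (hB : Bᴴ = B) :
    cycProd (revCycle σ k) B i = star (cycProd σ B i) := by
  rw [cycProd_of_agree (revCycle_agree_same h), cycProd_inv σ hB]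

lemma cycProd_revCycle_other {σ : Equiv.Perm (Fin n)} {k i : Fin n}
    (h : ¬ SameCycle σ k i) (B : Matrix (Fin n) (Fin n) R) :
    cycProd (revCycle σ k) B i = cycProd σ B i :=
  cycProd_of_agree (revCycle_agree_other h) B

lemma revCycle_involutive (σ : Equiv.Perm (Fin n)) (k : Fin n) :
    revCycle (revCycle σ k) k = σ := by
  ext1 j
  by_cases h : SameCycle σ k j
  · rw [revCycle_apply_same (sameCycle_revCycle.2 h), Equiv.Perm.inv_eq_iff_eq,
      revCycle_apply_same (sameCycle_apply_right.2 h), perm_inv_apply]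
  · rw [revCycle_apply_other (mt sameCycle_revCycle.1 h), revCycle_apply_other h]

/-! ### Merging two cycles by a transposition -/

lemma mul_swap_pow {τ : Equiv.Perm (Fin n)} {x y : Fin n} (h : ¬ SameCycle τ x y) {k : ℕ}
    (hk : 0 < k) (hk' : k ≤ minimalPeriod τ y) :
    ((τ * Equiv.swap x y) ^ k) x = (τ ^ k) y := by
  induction k with
  | zero => omega
  | succ k ih =>
    rw [pow_succ', Equiv.Perm.mul_apply, pow_succ' τ, Equiv.Perm.mul_apply τ]
    rcases Nat.eq_zero_or_pos k with rfl | hk0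
    · simp
    · rw [ih hk0 (by omega), Equiv.Perm.mul_apply, Equiv.swap_apply_of_ne_of_ne]
      · exact fun e => h (sameCycle_iff_pow.2 ⟨k, e⟩).symm
      · exact pow_ne_of_lt_period hk0 (by omega)

lemma mul_swap_pow_period {τ : Equiv.Perm (Fin n)} {x y : Fin n} (h : ¬ SameCycle τ x y) :
    ((τ * Equiv.swap x y) ^ minimalPeriod τ y) x = y := by
  rw [mul_swap_pow h (period_pos τ y) le_rfl, pow_period]

lemma period_mul_swap {τ : Equiv.Perm (Fin n)} {x y : Fin n} (h : ¬ SameCycle τ x y) :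
    minimalPeriod (τ * Equiv.swap x y) x = minimalPeriod τ y + minimalPeriod τ x := by
  have h' : ¬ SameCycle τ y x := fun e => h e.symm
  have hy := mul_swap_pow_period h
  have hx := mul_swap_pow_period h'
  rw [Equiv.swap_comm] at hx
  apply period_eq (by have := period_pos τ y; omega)
  · rw [add_comm, pow_add, Equiv.Perm.mul_apply, hy, hx]
  · intro k hk hk'
    by_cases hle : k ≤ minimalPeriod τ y
    · rw [mul_swap_pow h hk hle]
      exact fun e => h' (sameCycle_iff_pow.2 ⟨k, e⟩)
    · obtain ⟨j, rfl⟩ : ∃ j, k = j + minimalPeriod τ y := ⟨k - minimalPeriod τ y, by omega⟩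
      rw [pow_add, Equiv.Perm.mul_apply, hy, Equiv.swap_comm,
        mul_swap_pow h' (by omega) (by omega)]
      exact pow_ne_of_lt_period (by omega) (by omega)

lemma pathProd_mul_swap {τ : Equiv.Perm (Fin n)} {x y : Fin n} (h : ¬ SameCycle τ x y)
    {B : Matrix (Fin n) (Fin n) R} (hB : ∀ j, B x j = B y j) :
    pathProd (τ * Equiv.swap x y) B x (minimalPeriod τ y) = cycProd τ B y := by
  refine pathProd_congr fun k hk => ?_
  rw [mul_swap_pow h (Nat.succ_pos k) hk]
  rcases Nat.eq_zero_or_pos k with rfl | hk0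
  · exact hB _
  · rw [mul_swap_pow h hk0 hk.le]

/-- If rows `x` and `y` of `B` agree, merging the cycles of `x` and `y` multiplies their cycle
products. -/
lemma cycProd_mul_swap {τ : Equiv.Perm (Fin n)} {x y : Fin n} (h : ¬ SameCycle τ x y)
    {B : Matrix (Fin n) (Fin n) R} (hB : ∀ j, B x j = B y j) :
    cycProd (τ * Equiv.swap x y) B x = cycProd τ B y * cycProd τ B x := by
  have h' : ¬ SameCycle τ y x := fun e => h e.symm
  rw [cycProd, period_mul_swap h, pathProd_add, mul_swap_pow_period h, pathProd_mul_swap h hB]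
  congr 1
  rw [Equiv.swap_comm, pathProd_mul_swap h' fun j => (hB j).symm]

lemma mul_swap_agree {τ : Equiv.Perm (Fin n)} {x y z : Fin n} (hx : ¬ SameCycle τ x z)
    (hy : ¬ SameCycle τ y z) (j : Fin n) (hj : SameCycle τ z j) :
    (τ * Equiv.swap x y) j = τ j := by
  rw [Equiv.Perm.mul_apply, Equiv.swap_apply_of_ne_of_ne]
  · rintro rfl; exact hx hj.symm
  · rintro rfl; exact hy hj.symm

lemma sameCycle_mul_swap {τ : Equiv.Perm (Fin n)} {x y : Fin n} (h : ¬ SameCycle τ x y) :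
    SameCycle (τ * Equiv.swap x y) x y :=
  sameCycle_iff_pow.2 ⟨_, mul_swap_pow_period h⟩

lemma sameCycle_mul_swap_of_right {τ : Equiv.Perm (Fin n)} {x y z : Fin n}
    (h : ¬ SameCycle τ x y) (hz : SameCycle τ y z) : SameCycle (τ * Equiv.swap x y) x z := by
  obtain ⟨k, hk, rfl⟩ := sameCycle_iff_pow_lt.1 hz
  rcases Nat.eq_zero_or_pos k with rfl | hk0
  · exact sameCycle_mul_swap h
  · exact sameCycle_iff_pow.2 ⟨k, mul_swap_pow h hk0 hk.le⟩

lemma sameCycle_mul_swap_of_left {τ : Equiv.Perm (Fin n)} {x y z : Fin n}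
    (h : ¬ SameCycle τ x y) (hz : SameCycle τ x z) : SameCycle (τ * Equiv.swap x y) x z := by
  have h' : ¬ SameCycle τ y x := fun e => h e.symm
  have := sameCycle_mul_swap_of_right h' hz
  rw [Equiv.swap_comm] at this
  exact (sameCycle_mul_swap h).trans this

/-- A transposition of two points on a common cycle splits that cycle. -/
lemma not_sameCycle_mul_swap {σ : Equiv.Perm (Fin n)} {x y : Fin n} (hxy : x ≠ y)
    (h : SameCycle σ x y) : ¬ SameCycle (σ * Equiv.swap x y) x y := by
  classical
  have hex : ∃ k : ℕ, (σ ^ k) x = y := sameCycle_iff_pow.1 h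
  set m := Nat.find hex with hm
  have hmy : (σ ^ m) x = y := Nat.find_spec hex
  have hmin : ∀ k < m, (σ ^ k) x ≠ y := fun k hk => Nat.find_min hex hk
  have hm0 : 0 < m := by
    rcases Nat.eq_zero_or_pos m with h0 | h0
    · rw [h0] at hmy; exact absurd hmy hxy
    · exact h0
  have hnx : ∀ k, 0 < k → k ≤ m → (σ ^ k) x ≠ x := by
    intro k hk hkm e
    refine hmin (m - k) (by omega) ?_
    have : m = (m - k) + k := by omega
    rw [this, pow_add, Equiv.Perm.mul_apply, e] at hmy
    exact hmy
  -- The points `σ x, …, σ^m x = y` form a set stable under `σ * swap x y` that omits `x`.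
  have key : ∀ l : ℕ, ∃ k, 0 < k ∧ k ≤ m ∧ ((σ * Equiv.swap x y) ^ l) y = (σ ^ k) x := by
    intro l
    induction l with
    | zero => exact ⟨m, hm0, le_rfl, by simp [hmy]⟩
    | succ l ih =>
      obtain ⟨k, hk, hkm, e⟩ := ih
      rw [pow_succ', Equiv.Perm.mul_apply, e]
      by_cases hkm' : k = m
      · refine ⟨1, one_pos, hm0, ?_⟩
        rw [hkm', hmy]
        simp
      · refine ⟨k + 1, by omega, by omega, ?_⟩
        rw [Equiv.Perm.mul_apply, Equiv.swap_apply_of_ne_of_ne (hnx k hk hkm)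
          (hmin k (by omega)), pow_succ', Equiv.Perm.mul_apply]
  intro hs
  obtain ⟨l, hl⟩ := sameCycle_iff_pow.1 hs.symm
  obtain ⟨k, hk, hkm, e⟩ := key l
  exact hnx k hk hkm (e.symm.trans hl)

end Cycles

/-! ### Real parts of cycle products -/

/-- An abstract real part on a star ring `R`, with values in a commutative ring `C` that maps to
`R`: it is tracial, invariant under `star`, compatible with multiplication by scalars from `C`, and
`x + x* = 2 Re x`. -/
structure RealPart (R C : Type*) [Ring R] [StarRing R] [CommRing C] where
  /-- The real part. -/
  re : R →+ C
  /-- The map from the scalars to `R`. -/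
  incl : C →+* R
  re_mul_comm : ∀ x y, re (x * y) = re (y * x)
  re_star : ∀ x, re (star x) = re x
  re_mul_incl : ∀ x r, re (x * incl r) = re x * r
  add_star : ∀ x, x + star x = incl (2 * re x)

section Weights

variable {n : ℕ} {R C : Type*} [Ring R] [StarRing R] [CommRing C] (ρ : RealPart R C)

lemma RealPart.re_mul_add_re_star_mul (x y : R) :
    ρ.re (y * x) + ρ.re (star y * x) = 2 * (ρ.re x * ρ.re y) := by
  rw [ρ.re_mul_comm y, ρ.re_mul_comm (star y), ← map_add, ← mul_add, ρ.add_star, ρ.re_mul_incl]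
  ring

/-- The real part of a cycle product does not depend on the starting point. -/
lemma re_cycProd_of_sameCycle {σ : Equiv.Perm (Fin n)} {i j : Fin n} (h : SameCycle σ i j)
    (B : Matrix (Fin n) (Fin n) R) : ρ.re (cycProd σ B i) = ρ.re (cycProd σ B j) := by
  obtain ⟨k, rfl⟩ := sameCycle_iff_pow.1 h
  clear h
  induction k with
  | zero => rfl
  | succ k ih =>
    rw [ih, pow_succ', Equiv.Perm.mul_apply]
    obtain ⟨u, v, h1, h2⟩ := cycProd_rotate σ B ((σ ^ k) i)
    rw [h1, h2, ρ.re_mul_comm]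

/-- `T` contains exactly one point of each cycle of `σ`. -/
def IsTransversal (σ : Equiv.Perm (Fin n)) (T : Finset (Fin n)) : Prop :=
  (∀ i, ∃ t ∈ T, SameCycle σ i t) ∧ ∀ s ∈ T, ∀ t ∈ T, SameCycle σ s t → s = t

/-- The set of largest elements of the cycles of `σ`. -/
def leaders (σ : Equiv.Perm (Fin n)) : Finset (Fin n) :=
  Finset.univ.filter fun i => ∀ j, SameCycle σ i j → j ≤ i

lemma mem_leaders {σ : Equiv.Perm (Fin n)} {i : Fin n} :
    i ∈ leaders σ ↔ ∀ j, SameCycle σ i j → j ≤ i := by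
  simp [leaders]

lemma isTransversal_leaders (σ : Equiv.Perm (Fin n)) : IsTransversal σ (leaders σ) := by
  constructor
  · intro i
    have hne : (Finset.univ.filter fun j => SameCycle σ i j).Nonempty :=
      ⟨i, by simp [SameCycle.refl]⟩
    obtain ⟨t, ht, hmax⟩ := Finset.exists_max_image _ id hne
    simp only [Finset.mem_filter, Finset.mem_univ, true_and, id] at ht hmax
    exact ⟨t, mem_leaders.2 fun j hj => hmax j (ht.trans hj), ht⟩
  · intro s hs t ht h
    exact le_antisymm (mem_leaders.1 ht s h.symm) (mem_leaders.1 hs t h)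

/-- The product over the cycles of `σ` of the negatives of the real parts of the cycle products.
The signs of the factors combine, up to the global factor `(-1) ^ n`, to the sign of `σ`. -/
def weight (σ : Equiv.Perm (Fin n)) (B : Matrix (Fin n) (Fin n) R) : C :=
  ∏ t ∈ leaders σ, -ρ.re (cycProd σ B t)

lemma weight_eq_prod {σ : Equiv.Perm (Fin n)} {T : Finset (Fin n)} (hT : IsTransversal σ T)
    (B : Matrix (Fin n) (Fin n) R) : weight ρ σ B = ∏ t ∈ T, -ρ.re (cycProd σ B t) := by
  choose g hgT hg using hT.1
  have hL := isTransversal_leaders σ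
  refine Finset.prod_bij (fun t _ => g t) (fun t _ => hgT t) ?_ ?_ ?_
  · intro s hs t ht h
    have h1 := hg t
    rw [← h] at h1
    exact hL.2 s hs t ht ((hg s).trans h1.symm)
  · intro t ht
    obtain ⟨s, hs, hst⟩ := hL.1 t
    exact ⟨s, hs, hT.2 _ (hgT s) t ht ((hg s).symm.trans hst.symm)⟩
  · intro t _
    rw [re_cycProd_of_sameCycle ρ (hg t)]

lemma weight_submatrix (σ π : Equiv.Perm (Fin n)) (B : Matrix (Fin n) (Fin n) R) :
    weight ρ σ (B.submatrix π π) = weight ρ (π * σ * π⁻¹) B := by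
  have hL := isTransversal_leaders σ
  have hT : IsTransversal (π * σ * π⁻¹) ((leaders σ).map π.toEmbedding) := by
    constructor
    · intro i
      obtain ⟨t, ht, h⟩ := hL.1 (π⁻¹ i)
      refine ⟨π t, by simpa using ht, ?_⟩
      rwa [sameCycle_conj, perm_inv_apply]
    · intro s hs t ht h
      obtain ⟨s, hs', rfl⟩ := Finset.mem_map.1 hs
      obtain ⟨t, ht', rfl⟩ := Finset.mem_map.1 ht
      rw [sameCycle_conj] at h
      simp only [Equiv.coe_toEmbedding, perm_inv_apply] at h
      rw [hL.2 s hs' t ht' h]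
  rw [weight_eq_prod ρ hT, Finset.prod_map, weight]
  refine Finset.prod_congr rfl fun t _ => ?_
  rw [Equiv.coe_toEmbedding, cycProd_conj]

lemma sum_weight_submatrix (π : Equiv.Perm (Fin n)) (B : Matrix (Fin n) (Fin n) R) :
    ∑ σ, weight ρ σ (B.submatrix π π) = ∑ σ, weight ρ σ B := by
  simp only [weight_submatrix]
  exact Equiv.sum_comp (MulAut.conj π).toEquiv fun σ => weight ρ σ B

lemma leaders_revCycle (σ : Equiv.Perm (Fin n)) (k : Fin n) :
    leaders (revCycle σ k) = leaders σ := by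
  ext i
  simp only [mem_leaders, sameCycle_revCycle]

lemma weight_revCycle (σ : Equiv.Perm (Fin n)) (k : Fin n) {B : Matrix (Fin n) (Fin n) R}
    (hB : Bᴴ = B) : weight ρ (revCycle σ k) B = weight ρ σ B := by
  unfold weight
  rw [leaders_revCycle]
  refine Finset.prod_congr rfl fun t _ => ?_
  by_cases h : SameCycle σ k t
  · rw [cycProd_revCycle_same h hB, ρ.re_star]
  · rw [cycProd_revCycle_other h]

/-! ### Vanishing for repeated rows -/

/-- The points of `leaders σ` off the cycles of `x` and `y`. -/
def otherLeaders (σ : Equiv.Perm (Fin n)) (x y : Fin n) : Finset (Fin n) :=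
  (leaders σ).filter fun t => ¬ SameCycle σ x t ∧ ¬ SameCycle σ y t

lemma weight_of_not_sameCycle {τ : Equiv.Perm (Fin n)} {x y : Fin n} (h : ¬ SameCycle τ x y)
    (B : Matrix (Fin n) (Fin n) R) :
    weight ρ τ B = ρ.re (cycProd τ B x) * ρ.re (cycProd τ B y) *
      ∏ t ∈ otherLeaders τ x y, -ρ.re (cycProd τ B t) := by
  have hL := isTransversal_leaders τ
  have hyS : y ∉ otherLeaders τ x y := fun hy =>
    (Finset.mem_filter.1 hy).2.2 (SameCycle.refl _ _)
  have hxS : x ∉ insert y (otherLeaders τ x y) := fun hx => by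
    rcases Finset.mem_insert.1 hx with e | hx
    · exact h (e ▸ SameCycle.refl _ _)
    · exact (Finset.mem_filter.1 hx).2.1 (SameCycle.refl _ _)
  have hT : IsTransversal τ (insert x (insert y (otherLeaders τ x y))) := by
    constructor
    · intro i
      by_cases hx : SameCycle τ x i
      · exact ⟨x, by simp, hx.symm⟩
      by_cases hy : SameCycle τ y i
      · exact ⟨y, by simp, hy.symm⟩
      obtain ⟨t, ht, hit⟩ := hL.1 i
      refine ⟨t, ?_, hit⟩
      have : t ∈ otherLeaders τ x y := Finset.mem_filter.2
        ⟨ht, fun e => hx (e.trans hit.symm), fun e => hy (e.trans hit.symm)⟩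
      simp [this]
    · have hS : ∀ t ∈ otherLeaders τ x y, t ∈ leaders τ ∧ ¬ SameCycle τ x t ∧ ¬ SameCycle τ y t :=
        fun t ht => Finset.mem_filter.1 ht
      intro s hs t ht hst
      simp only [Finset.mem_insert] at hs ht
      rcases hs with rfl | rfl | hs <;> rcases ht with rfl | rfl | ht
      · rfl
      · exact absurd hst h
      · exact absurd hst (hS t ht).2.1
      · exact absurd hst.symm h
      · rfl
      · exact absurd hst (hS t ht).2.2
      · exact absurd hst.symm (hS s hs).2.1
      · exact absurd hst.symm (hS s hs).2.2
      · exact hL.2 s (hS s hs).1 t (hS t ht).1 hst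
  rw [weight_eq_prod ρ hT, Finset.prod_insert hxS, Finset.prod_insert hyS]
  ring

lemma weight_mul_swap {τ : Equiv.Perm (Fin n)} {x y : Fin n} (h : ¬ SameCycle τ x y)
    {B : Matrix (Fin n) (Fin n) R} (hB : ∀ j, B x j = B y j) :
    weight ρ (τ * Equiv.swap x y) B = -(ρ.re (cycProd τ B y * cycProd τ B x) *
      ∏ t ∈ otherLeaders τ x y, -ρ.re (cycProd τ B t)) := by
  have hL := isTransversal_leaders τ
  have hS : ∀ t ∈ otherLeaders τ x y, t ∈ leaders τ ∧ ¬ SameCycle τ x t ∧ ¬ SameCycle τ y t :=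
    fun t ht => Finset.mem_filter.1 ht
  have hxS : x ∉ otherLeaders τ x y := fun hx => (hS x hx).2.1 (SameCycle.refl _ _)
  have hoff : ∀ t ∈ otherLeaders τ x y, ∀ j,
      SameCycle (τ * Equiv.swap x y) t j ↔ SameCycle τ t j := fun t ht =>
    sameCycle_of_agree (mul_swap_agree (hS t ht).2.1 (hS t ht).2.2)
  have hT : IsTransversal (τ * Equiv.swap x y) (insert x (otherLeaders τ x y)) := by
    constructor
    · intro i
      by_cases hx : SameCycle τ x i
      · exact ⟨x, by simp, (sameCycle_mul_swap_of_left h hx).symm⟩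
      by_cases hy : SameCycle τ y i
      · exact ⟨x, by simp, (sameCycle_mul_swap_of_right h hy).symm⟩
      obtain ⟨t, ht, hit⟩ := hL.1 i
      have ht' : t ∈ otherLeaders τ x y := Finset.mem_filter.2
        ⟨ht, fun e => hx (e.trans hit.symm), fun e => hy (e.trans hit.symm)⟩
      exact ⟨t, by simp [ht'], ((hoff t ht' i).2 hit.symm).symm⟩
    · intro s hs t ht hst
      simp only [Finset.mem_insert] at hs ht
      rcases hs with rfl | hs <;> rcases ht with rfl | ht
      · rfl
      · exact absurd ((hoff t ht s).1 hst.symm).symm (hS t ht).2.1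
      · exact absurd ((hoff s hs t).1 hst).symm (hS s hs).2.1
      · exact hL.2 s (hS s hs).1 t (hS t ht).1 ((hoff s hs t).1 hst)
  rw [weight_eq_prod ρ hT, Finset.prod_insert hxS, cycProd_mul_swap h hB, neg_mul]
  congr 2
  refine Finset.prod_congr rfl fun t ht => ?_
  rw [cycProd_of_agree (mul_swap_agree (hS t ht).2.1 (hS t ht).2.2)]

/-- Merging two cycles, with either relative orientation, cancels against leaving them apart:
this is `Re (y x) + Re (y* x) = 2 Re x Re y`. -/
lemma weight_cancel {τ : Equiv.Perm (Fin n)} {x y : Fin n} (h : ¬ SameCycle τ x y)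
    {B : Matrix (Fin n) (Fin n) R} (hB : Bᴴ = B) (hxy : ∀ j, B x j = B y j) :
    weight ρ (τ * Equiv.swap x y) B + weight ρ (revCycle τ y * Equiv.swap x y) B
      + 2 * weight ρ τ B = 0 := by
  have h' : ¬ SameCycle (revCycle τ y) x y := mt sameCycle_revCycle.1 h
  have hS : otherLeaders (revCycle τ y) x y = otherLeaders τ x y := by
    simp only [otherLeaders, leaders_revCycle, sameCycle_revCycle]
  have hP : ∏ t ∈ otherLeaders τ x y, -ρ.re (cycProd (revCycle τ y) B t)
      = ∏ t ∈ otherLeaders τ x y, -ρ.re (cycProd τ B t) :=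
    Finset.prod_congr rfl fun t ht => by
      rw [cycProd_revCycle_other (Finset.mem_filter.1 ht).2.2]
  rw [weight_mul_swap ρ h hxy, weight_mul_swap ρ h' hxy, weight_of_not_sameCycle ρ h, hS, hP,
    cycProd_revCycle_same (SameCycle.refl _ _) hB,
    cycProd_revCycle_other (fun e : SameCycle τ y x => h e.symm)]
  have := ρ.re_mul_add_re_star_mul (cycProd τ B x) (cycProd τ B y)
  linear_combination (-∏ t ∈ otherLeaders τ x y, -ρ.re (cycProd τ B t)) * this

lemma sum_weight_eq_zero [IsAddTorsionFree C] {x y : Fin n} (hne : x ≠ y)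
    {B : Matrix (Fin n) (Fin n) R} (hB : Bᴴ = B) (hxy : ∀ j, B x j = B y j) :
    ∑ σ, weight ρ σ B = 0 := by
  classical
  set D : Finset (Equiv.Perm (Fin n)) := Finset.univ.filter fun τ => ¬ SameCycle τ x y with hD
  have hmem : ∀ τ, τ ∈ D ↔ ¬ SameCycle τ x y := fun τ => by simp [hD]
  have hsw : ∑ σ ∈ Dᶜ, weight ρ σ B = ∑ τ ∈ D, weight ρ (τ * Equiv.swap x y) B := by
    refine Finset.sum_bij' (fun σ _ => σ * Equiv.swap x y) (fun τ _ => τ * Equiv.swap x y)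
      ?_ ?_ ?_ ?_ ?_
    · intro σ hσ
      rw [Finset.mem_compl, hmem, not_not] at hσ
      exact (hmem _).2 (not_sameCycle_mul_swap hne hσ)
    · intro τ hτ
      rw [Finset.mem_compl, hmem, not_not]
      exact sameCycle_mul_swap ((hmem τ).1 hτ)
    · intro σ _; simp [mul_assoc]
    · intro σ _; simp [mul_assoc]
    · intro σ _; simp [mul_assoc]
  have hrev : ∑ τ ∈ D, weight ρ (τ * Equiv.swap x y) B
      = ∑ τ ∈ D, weight ρ (revCycle τ y * Equiv.swap x y) B := by
    refine Finset.sum_bij' (fun τ _ => revCycle τ y) (fun τ _ => revCycle τ y) ?_ ?_ ?_ ?_ ?_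
    · intro τ hτ
      rw [hmem] at hτ ⊢
      exact mt sameCycle_revCycle.1 hτ
    · intro τ hτ
      rw [hmem] at hτ ⊢
      exact mt sameCycle_revCycle.1 hτ
    · intro τ _; exact revCycle_involutive τ y
    · intro τ _; exact revCycle_involutive τ y
    · intro τ _; simp only [revCycle_involutive]
  have h0 : ∑ τ ∈ D, (weight ρ (τ * Equiv.swap x y) B
      + weight ρ (revCycle τ y * Equiv.swap x y) B + 2 * weight ρ τ B) = 0 :=
    Finset.sum_eq_zero fun τ hτ => weight_cancel ρ ((hmem τ).1 hτ) hB hxy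
  rw [Finset.sum_add_distrib, Finset.sum_add_distrib, ← hrev, ← Finset.mul_sum] at h0
  rw [← Finset.sum_add_sum_compl D, hsw]
  refine (nsmul_eq_zero_iff_right two_ne_zero).1 ?_
  rw [two_nsmul]
  linear_combination h0

end Weights

/-! ### Sums over all index functions and traces of powers -/

section Traces

variable {n : ℕ} {R : Type*} [Ring R]

lemma sum_open_path (A : Matrix (Fin n) (Fin n) R) (m : ℕ) (F : Matrix (Fin n) (Fin n) R) :
    ∑ g : Fin (m + 1) → Fin n, (List.ofFn fun k : Fin m => A (g k.castSucc) (g k.succ)).prod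
      * F (g (Fin.last m)) (g 0) = (A ^ m * F).trace := by
  induction m generalizing F with
  | zero =>
    rw [← Equiv.sum_comp (Equiv.funUnique (Fin 1) (Fin n)).symm]
    simp [Matrix.trace]
  | succ m ih =>
    rw [pow_succ, mul_assoc, ← ih, ← Equiv.sum_comp (Fin.snocEquiv fun _ => Fin n),
      Fintype.sum_prod_type_right]
    refine Finset.sum_congr rfl fun g _ => ?_
    rw [Matrix.mul_apply, Finset.mul_sum]
    refine Finset.sum_congr rfl fun b _ => ?_
    rw [List.ofFn_succ', List.concat_eq_append, List.prod_append, List.prod_singleton, mul_assoc]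
    have h0 : (Fin.snoc g b : Fin (m + 2) → Fin n) 0 = g 0 :=
      Fin.snoc_castSucc (α := fun _ => Fin n) b g 0
    have hs : ∀ k : Fin m, (Fin.snoc g b : Fin (m + 2) → Fin n) k.castSucc.succ = g k.succ :=
      fun k => by
        rw [Fin.succ_castSucc]
        exact Fin.snoc_castSucc (α := fun _ => Fin n) b g k.succ
    simp only [Fin.snocEquiv_apply, Fin.snoc_castSucc, Fin.succ_last, Fin.snoc_last, h0, hs]

lemma sum_closed_path (A : Matrix (Fin n) (Fin n) R) {l : ℕ} (hl : 0 < l) :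
    ∑ g : Fin l → Fin n, (List.ofFn fun k => A (g k) (g (finRotate l k))).prod
      = (A ^ l).trace := by
  obtain ⟨m, rfl⟩ : ∃ m, l = m + 1 := ⟨l - 1, by omega⟩
  rw [pow_succ, ← sum_open_path]
  refine Finset.sum_congr rfl fun g _ => ?_
  rw [List.ofFn_succ', List.concat_eq_append, List.prod_append, List.prod_singleton]
  simp only [finRotate_apply, Fin.coeSucc_eq_succ, Fin.last_add_one]

lemma cycProd_submatrix_eq_closed_path (σ : Equiv.Perm (Fin n)) (A : Matrix (Fin n) (Fin n) R)
    (f : Fin n → Fin n) (i : Fin n) :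
    cycProd σ (A.submatrix f f) i = (List.ofFn fun k : Fin (minimalPeriod σ i) =>
      A (f ((σ ^ (k : ℕ)) i)) (f ((σ ^ (finRotate _ k : ℕ)) i))).prod := by
  have hrot : ∀ (l : ℕ) (k : Fin l), (finRotate l k : ℕ) = (k + 1) % l := by
    intro l k
    obtain ⟨m, rfl⟩ : ∃ m, l = m + 1 := ⟨l - 1, by have := k.2; omega⟩
    rw [finRotate_apply, Fin.val_add]
    simp
  rw [cycProd, pathProd]
  congr 1
  refine List.ext_getElem (by simp) fun k h1 h2 => ?_
  simp only [List.getElem_map, List.getElem_range, List.getElem_ofFn, hrot, Matrix.submatrix_apply]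
  congr 2
  rw [← Equiv.Perm.iterate_eq_pow, ← Equiv.Perm.iterate_eq_pow, iterate_mod_minimalPeriod_eq]

/-- Each point is `σ ^ k t` for a unique `t` in the transversal `T` and a unique `k` below the
length of the cycle of `t`. -/
def transversalEquiv {σ : Equiv.Perm (Fin n)} {T : Finset (Fin n)} (hT : IsTransversal σ T) :
    (Σ t : T, Fin (minimalPeriod σ t.1)) ≃ Fin n :=
  Equiv.ofBijective (fun p => (σ ^ (p.2 : ℕ)) p.1.1) (by
    constructor
    · rintro ⟨⟨s, hs⟩, j⟩ ⟨⟨t, ht⟩, k⟩ h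
      simp only at h
      have hst : s = t := hT.2 s hs t ht
        ((sameCycle_iff_pow.2 ⟨j, h⟩).trans (sameCycle_iff_pow.2 ⟨k, rfl⟩).symm)
      subst hst
      rw [← Equiv.Perm.iterate_eq_pow, ← Equiv.Perm.iterate_eq_pow] at h
      have := (iterate_eq_iterate_iff_of_lt_minimalPeriod j.2 k.2).1 h
      rw [Fin.ext this]
    · intro i
      obtain ⟨t, ht, h⟩ := hT.1 i
      obtain ⟨k, hk, e⟩ := sameCycle_iff_pow_lt.1 h.symm
      exact ⟨⟨⟨t, ht⟩, ⟨k, hk⟩⟩, e⟩)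

variable {C : Type*} [StarRing R] [CommRing C] (ρ : RealPart R C)

/-- Summed over all index functions, the weight of `σ` factors over the cycles of `σ` into traces
of powers of `A`. -/
lemma sum_weight_functions (σ : Equiv.Perm (Fin n)) (A : Matrix (Fin n) (Fin n) R) :
    ∑ f : Fin n → Fin n, weight ρ σ (A.submatrix f f)
      = ∏ t : leaders σ, -ρ.re (A ^ minimalPeriod σ t.1).trace := by
  have hL := isTransversal_leaders σ
  let e : (Fin n → Fin n) ≃ (∀ t : leaders σ, Fin (minimalPeriod σ t.1) → Fin n) :=
    ((transversalEquiv hL).symm.arrowCongr (Equiv.refl _)).trans (Equiv.piCurry fun _ _ => Fin n)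
  have h1 : ∀ f : Fin n → Fin n, weight ρ σ (A.submatrix f f) = ∏ t : leaders σ,
      -ρ.re (List.ofFn fun k => A (e f t k) (e f t (finRotate _ k))).prod := by
    intro f
    rw [weight, ← Finset.prod_coe_sort]
    refine Finset.prod_congr rfl fun t _ => ?_
    rw [cycProd_submatrix_eq_closed_path]
    rfl
  simp only [h1]
  rw [Equiv.sum_comp e fun h : ∀ t : leaders σ, Fin (minimalPeriod σ t.1) → Fin n =>
      ∏ t : leaders σ, -ρ.re (List.ofFn fun k => A (h t k) (h t (finRotate _ k))).prod,
    ← Fintype.piFinset_univ, ← Finset.prod_univ_sum (fun _ => Finset.univ)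
      (fun (t : leaders σ) (g : Fin (minimalPeriod σ t.1) → Fin n) =>
        -ρ.re (List.ofFn fun k => A (g k) (g (finRotate _ k))).prod)]
  refine Finset.prod_congr rfl fun t _ => ?_
  rw [Finset.sum_neg_distrib, ← map_sum, sum_closed_path A (period_pos σ t.1)]

lemma submatrix_hermitian {A : Matrix (Fin n) (Fin n) R} (hA : Aᴴ = A) (f : Fin n → Fin n) :
    (A.submatrix f f)ᴴ = A.submatrix f f := by
  rw [Matrix.conjTranspose_submatrix, hA]

/-- The sum of the weights is determined by the real parts of the traces of the powers of `A`. -/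
lemma factorial_smul_sum_weight [IsAddTorsionFree C] {A : Matrix (Fin n) (Fin n) R}
    (hA : Aᴴ = A) :
    n.factorial • ∑ σ, weight ρ σ A
      = ∑ σ : Equiv.Perm (Fin n), ∏ t : leaders σ, -ρ.re (A ^ minimalPeriod σ t.1).trace := by
  classical
  simp only [← sum_weight_functions]
  rw [Finset.sum_comm]
  have h0 : ∀ f : Fin n → Fin n, f ∉ Finset.univ.filter (fun f => Bijective f) →
      ∑ σ, weight ρ σ (A.submatrix f f) = 0 := by
    intro f hf
    have hinj : ¬ Injective f := by
      intro h
      exact hf (Finset.mem_filter.2 ⟨Finset.mem_univ _, Finite.injective_iff_bijective.1 h⟩)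
    obtain ⟨x, y, hxy, hne⟩ := Function.not_injective_iff.1 hinj
    exact sum_weight_eq_zero ρ hne (submatrix_hermitian hA f) fun j => by
      simp only [Matrix.submatrix_apply, hxy]
  rw [← Finset.sum_subset (Finset.subset_univ (Finset.univ.filter fun f => Bijective f))
    fun f _ hf => h0 f hf]
  have h2 : ∑ f ∈ Finset.univ.filter (fun f : Fin n → Fin n => Bijective f),
      ∑ σ, weight ρ σ (A.submatrix f f)
      = ∑ π : Equiv.Perm (Fin n), ∑ σ, weight ρ σ (A.submatrix π π) := by
    refine (Finset.sum_bij (fun (π : Equiv.Perm (Fin n)) _ => (π : Fin n → Fin n)) ?_ ?_ ?_ ?_).symm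
    · intro π _; exact Finset.mem_filter.2 ⟨Finset.mem_univ _, π.bijective⟩
    · intro π _ π' _ h; exact DFunLike.coe_injective h
    · intro f hf
      exact ⟨Equiv.ofBijective f (Finset.mem_filter.1 hf).2, Finset.mem_univ _, rfl⟩
    · intro π _; rfl
  rw [h2]
  simp only [sum_weight_submatrix]
  simp [Fintype.card_perm]

lemma sum_weight_unitary [IsAddTorsionFree C] {A U : Matrix (Fin n) (Fin n) R} (hA : Aᴴ = A)
    (hU : U * Uᴴ = 1) :
    ∑ σ, weight ρ σ (Uᴴ * A * U) = ∑ σ, weight ρ σ A := by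
  have hpow : ∀ l, 0 < l → (Uᴴ * A * U) ^ l = Uᴴ * A ^ l * U := by
    intro l hl
    induction l, hl using Nat.le_induction with
    | base => simp
    | succ l hl ih =>
      rw [pow_succ, ih, pow_succ]
      calc Uᴴ * A ^ l * U * (Uᴴ * A * U) = Uᴴ * A ^ l * (U * Uᴴ) * A * U := by noncomm_ring
        _ = _ := by rw [hU]; noncomm_ring
  have htr : ∀ M N : Matrix (Fin n) (Fin n) R, ρ.re (M * N).trace = ρ.re (N * M).trace := by
    intro M N
    simp only [Matrix.trace, Matrix.diag_apply, Matrix.mul_apply, map_sum]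
    rw [Finset.sum_comm]
    exact Finset.sum_congr rfl fun i _ => Finset.sum_congr rfl fun j _ => ρ.re_mul_comm _ _
  have hA' : (Uᴴ * A * U)ᴴ = Uᴴ * A * U := by
    simp only [Matrix.conjTranspose_mul, Matrix.conjTranspose_conjTranspose, hA, mul_assoc]
  refine IsAddTorsionFree.nsmul_right_injective (Nat.factorial_ne_zero n) ?_
  simp only
  rw [factorial_smul_sum_weight ρ hA', factorial_smul_sum_weight ρ hA]
  refine Finset.sum_congr rfl fun σ _ => Finset.prod_congr rfl fun t _ => ?_
  rw [hpow _ (period_pos σ t.1), htr, ← mul_assoc, hU, one_mul]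

end Traces

/-! ### The Chen determinant of a Hermitian matrix -/

section Chen

variable {n : ℕ} {R : Type*} [Ring R]

lemma cycleList_eq (σ : Equiv.Perm (Fin n)) (i : Fin n) :
    cycleList σ i = (List.range (minimalPeriod σ i)).map fun k => (σ ^ k) i := by
  obtain ⟨m, hm⟩ : ∃ m, minimalPeriod σ i = m + 1 :=
    ⟨minimalPeriod σ i - 1, by have := period_pos σ i; omega⟩
  obtain ⟨r, hr⟩ : ∃ r, n = m + (r + 1) := ⟨n - m - 1, by have := period_le σ i; omega⟩
  have hrange : (List.range n).map (fun k => (σ ^ (k + 1)) i)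
      = (List.range m).map (fun k => (σ ^ (k + 1)) i)
        ++ i :: (List.range r).map (fun k => (σ ^ (m + (k + 1) + 1)) i) := by
    have hi : (σ ^ (m + 1)) i = i := hm ▸ pow_period σ i
    have : List.range n = List.range (m + (r + 1)) := by rw [← hr]
    rw [this, List.range_add, List.map_append, List.range_succ_eq_map]
    simp [hi, Function.comp_def]
  rw [cycleList, hrange, hm, List.range_succ_eq_map, List.takeWhile_append_of_pos]
  · simp [Function.comp_def]
  · intro j hj
    obtain ⟨k, hk, rfl⟩ := List.mem_map.1 hj
    have := List.mem_range.1 hk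
    simpa using pow_ne_of_lt_period (σ := σ) (i := i) (Nat.succ_pos k) (by omega)

lemma cycleList_prod (σ : Equiv.Perm (Fin n)) (A : Matrix (Fin n) (Fin n) R) (i : Fin n) :
    ((cycleList σ i).map fun j => A j (σ j)).prod = cycProd σ A i := by
  rw [cycleList_eq, cycProd, pathProd, List.map_map]
  congr 1
  refine List.map_congr_left fun k _ => ?_
  simp only [Function.comp_apply, pow_succ', Equiv.Perm.mul_apply]

lemma cycleList_all_iff (σ : Equiv.Perm (Fin n)) (i : Fin n) :
    (cycleList σ i).all (fun j => decide (j ≤ i)) = true ↔ i ∈ leaders σ := by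
  rw [mem_leaders, cycleList_eq]
  simp only [List.all_map, List.all_eq_true, List.mem_range, Function.comp_apply,
    decide_eq_true_eq, sameCycle_iff_pow_lt]
  constructor
  · rintro h j ⟨k, hk, rfl⟩
    exact h k hk
  · intro h k hk
    exact h _ ⟨k, hk, rfl⟩

lemma neg_one_pow_length_mul_prod {α : Type*} (L : List α) (f : α → R) :
    (-1 : R) ^ L.length * (L.map f).prod = (L.map fun a => -f a).prod := by
  induction L with
  | nil => simp
  | cons a L ih =>
    rw [List.length_cons, List.map_cons, List.map_cons, List.prod_cons, List.prod_cons, ← ih,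
      pow_succ]
    have hc := ((Commute.one_left (f a)).neg_left.pow_left L.length).eq
    rw [neg_mul, mul_assoc, neg_one_mul, mul_neg, ← mul_assoc, hc, mul_assoc]

lemma prod_map_filter_eq {α : Type*} (L : List α) (p : α → Bool) (f : α → R) :
    ((L.filter p).map f).prod = (L.map fun a => if p a = true then f a else 1).prod := by
  induction L with
  | nil => rfl
  | cons a L ih =>
    by_cases h : p a = true
    · simp [h, ih]
    · simp [h, ih]

lemma list_prod_add {α : Type*} {L : List α} (hL : L.Nodup) {k : α} (hk : k ∈ L)
    {f g h : α → R} (hf : ∀ i, i ≠ k → f i = h i) (hg : ∀ i, i ≠ k → g i = h i)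
    (hsum : f k + g k = h k) : (L.map f).prod + (L.map g).prod = (L.map h).prod := by
  obtain ⟨L₁, L₂, rfl⟩ := List.append_of_mem hk
  have h1 : k ∉ L₁ := fun hmem =>
    (List.nodup_append.1 hL).2.2 k hmem k (by simp) rfl
  have h2 : k ∉ L₂ := (List.nodup_cons.1 (List.nodup_append.1 hL).2.1).1
  have e : ∀ (M : List α), k ∉ M → M.map f = M.map h ∧ M.map g = M.map h := fun M hM =>
    ⟨List.map_congr_left fun i hi => hf i fun e => hM (e ▸ hi),
      List.map_congr_left fun i hi => hg i fun e => hM (e ▸ hi)⟩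
  simp only [List.map_append, List.map_cons, List.prod_append, List.prod_cons, (e L₁ h1).1,
    (e L₁ h1).2, (e L₂ h2).1, (e L₂ h2).2, ← hsum]
  noncomm_ring

variable [StarRing R] {C : Type*} [CommRing C] (ρ : RealPart R C)

open Classical in
/-- The contribution of `i` to the Chen product of `σ`: trivial unless `i` leads a cycle, and then
the negative of the cycle product, replaced by its real part if `i ∈ S`. -/
def chenFactor (S : Finset (Fin n)) (A : Matrix (Fin n) (Fin n) R) (σ : Equiv.Perm (Fin n))
    (i : Fin n) : R :=
  if i ∈ leaders σ then
    if i ∈ S then -ρ.incl (ρ.re (cycProd σ A i)) else -cycProd σ A i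
  else 1

/-- The ordered product of the factors `chenFactor` in decreasing order of the leaders. -/
def chenProd (S : Finset (Fin n)) (A : Matrix (Fin n) (Fin n) R) (σ : Equiv.Perm (Fin n)) : R :=
  ((List.finRange n).reverse.map (chenFactor ρ S A σ)).prod

lemma Cdet_eq_sum_chenProd (A : Matrix (Fin n) (Fin n) R) :
    Cdet A = (-1) ^ n * ∑ σ, chenProd ρ ∅ A σ := by
  rw [Cdet, Finset.mul_sum]
  refine Finset.sum_congr rfl fun σ _ => ?_
  have hlen : (chenLeaders σ).length ≤ n := by
    rw [chenLeaders, List.length_reverse]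
    exact (List.length_filter_le _ _).trans (by simp)
  have hsign : (-1 : R) ^ (n - (chenLeaders σ).length)
      = (-1) ^ n * (-1) ^ (chenLeaders σ).length := by
    rw [← pow_add]
    obtain ⟨r, hr⟩ := Nat.exists_eq_add_of_le hlen
    generalize (chenLeaders σ).length = a at *
    have h1 : n - a = r := by omega
    have h2 : n + a = r + 2 * a := by omega
    rw [h1, h2, pow_add, pow_mul]
    simp
  have hprod : ((chenOrder σ).map fun i => A i (σ i)).prod
      = ((chenLeaders σ).map fun i => cycProd σ A i).prod := by
    rw [chenOrder, List.map_flatten, List.prod_flatten, List.map_map, List.map_map]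
    congr 1
    exact List.map_congr_left fun i _ => cycleList_prod σ A i
  rw [hsign, hprod, mul_assoc, neg_one_pow_length_mul_prod, chenLeaders, ← List.filter_reverse,
    prod_map_filter_eq, chenProd]
  congr 2
  refine List.map_congr_left fun i _ => ?_
  simp only [cycleList_all_iff, chenFactor, Finset.notMem_empty, if_false]

/-- Averaging over the two orientations of the cycle led by `k` turns its cycle product into the
real part. -/
lemma chenProd_add_revCycle {A : Matrix (Fin n) (Fin n) R} (hA : Aᴴ = A) {S : Finset (Fin n)}
    {k : Fin n} (hkS : k ∉ S) {σ : Equiv.Perm (Fin n)} (hk : k ∈ leaders σ) :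
    chenProd ρ S A σ + chenProd ρ S A (revCycle σ k) = 2 * chenProd ρ (insert k S) A σ := by
  classical
  have hoff : ∀ i, i ≠ k → chenFactor ρ S A (revCycle σ k) i = chenFactor ρ S A σ i := by
    intro i hi
    unfold chenFactor
    rw [leaders_revCycle]
    by_cases hiL : i ∈ leaders σ
    · have : ¬ SameCycle σ k i := fun h => hi ((isTransversal_leaders σ).2 k hk i hiL h).symm
      rw [cycProd_revCycle_other this]
    · simp [hiL]
  have hins : ∀ i, i ≠ k → chenFactor ρ (insert k S) A σ i = chenFactor ρ S A σ i := by
    intro i hi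
    simp [chenFactor, hi]
  have hnodup : (List.finRange n).reverse.Nodup := List.nodup_reverse.2 (List.nodup_finRange n)
  have hmem : k ∈ (List.finRange n).reverse := by simp
  unfold chenProd
  -- Either side is a sum of two products that differ at most in the factor at `k`.
  rw [two_mul, list_prod_add hnodup hmem
    (h := fun i => if i = k then chenFactor ρ S A σ k + chenFactor ρ S A (revCycle σ k) k
      else chenFactor ρ S A σ i), list_prod_add hnodup hmem
    (h := fun i => if i = k then chenFactor ρ (insert k S) A σ k
      + chenFactor ρ (insert k S) A σ k else chenFactor ρ S A σ i)]
  · congr 1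
    refine List.map_congr_left fun i _ => ?_
    by_cases hi : i = k
    · simp only [hi, if_true, chenFactor, leaders_revCycle, hk, hkS, if_false,
        Finset.mem_insert_self, cycProd_revCycle_same (SameCycle.refl σ k) hA]
      rw [← neg_add, ρ.add_star, two_mul, map_add, neg_add]
    · simp only [hi, if_false]
  · intro i hi; simp only [hi, if_false, hins i hi]
  · intro i hi; simp only [hi, if_false, hins i hi]
  · simp
  · intro i hi; simp only [hi, if_false]
  · intro i hi; simp only [hi, if_false, hoff i hi]
  · simp

lemma sum_chenProd_insert [IsAddTorsionFree R] {A : Matrix (Fin n) (Fin n) R} (hA : Aᴴ = A)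
    {S : Finset (Fin n)} {k : Fin n} (hkS : k ∉ S) :
    ∑ σ, chenProd ρ (insert k S) A σ = ∑ σ, chenProd ρ S A σ := by
  classical
  set D : Finset (Equiv.Perm (Fin n)) := Finset.univ.filter fun σ => k ∈ leaders σ with hD
  have hmem : ∀ σ, σ ∈ D ↔ k ∈ leaders σ := fun σ => by simp [hD]
  rw [← Finset.sum_add_sum_compl D, ← Finset.sum_add_sum_compl D (chenProd ρ S A)]
  congr 1
  · have hrev : ∑ σ ∈ D, chenProd ρ S A σ = ∑ σ ∈ D, chenProd ρ S A (revCycle σ k) := by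
      refine Finset.sum_bij' (fun τ _ => revCycle τ k) (fun τ _ => revCycle τ k) ?_ ?_ ?_ ?_ ?_
      · intro τ hτ
        rwa [hmem, leaders_revCycle, ← hmem]
      · intro τ hτ
        rwa [hmem, leaders_revCycle, ← hmem]
      · intro τ _; exact revCycle_involutive τ k
      · intro τ _; exact revCycle_involutive τ k
      · intro τ _; simp only [revCycle_involutive]
    refine IsAddTorsionFree.nsmul_right_injective two_ne_zero ?_
    simp only
    rw [two_nsmul (∑ σ ∈ D, chenProd ρ S A σ)]
    nth_rewrite 2 [hrev]
    rw [← Finset.sum_add_distrib, Finset.smul_sum]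
    refine Finset.sum_congr rfl fun σ hσ => ?_
    rw [chenProd_add_revCycle ρ hA hkS ((hmem σ).1 hσ), nsmul_eq_mul, Nat.cast_ofNat]
  · refine Finset.sum_congr rfl fun σ hσ => ?_
    have hk : k ∉ leaders σ := by rwa [Finset.mem_compl, hmem] at hσ
    unfold chenProd
    congr 1
    refine List.map_congr_left fun i _ => ?_
    by_cases hi : i = k
    · simp [chenFactor, hi, hk]
    · simp [chenFactor, hi]

lemma chenProd_univ (A : Matrix (Fin n) (Fin n) R) (σ : Equiv.Perm (Fin n)) :
    chenProd ρ Finset.univ A σ = ρ.incl (weight ρ σ A) := by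
  classical
  have h : chenFactor ρ Finset.univ A σ
      = ρ.incl ∘ fun i => if i ∈ leaders σ then -ρ.re (cycProd σ A i) else 1 := by
    funext i
    by_cases hi : i ∈ leaders σ <;> simp [chenFactor, hi]
  rw [chenProd, h, ← List.map_map, ← map_list_prod]
  congr 1
  rw [List.map_reverse, List.prod_reverse, ← List.ofFn_eq_map, List.prod_ofFn,
    Finset.prod_ite_mem, Finset.univ_inter, weight]

/-- For Hermitian matrices every cycle product in the Chen determinant may be replaced by its real
part. -/
lemma Cdet_eq_sum_weight [IsAddTorsionFree R] {A : Matrix (Fin n) (Fin n) R} (hA : Aᴴ = A) :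
    Cdet A = (-1) ^ n * ρ.incl (∑ σ, weight ρ σ A) := by
  classical
  have h : ∀ S : Finset (Fin n), ∑ σ, chenProd ρ S A σ = ∑ σ, chenProd ρ ∅ A σ := by
    intro S
    induction S using Finset.induction_on with
    | empty => rfl
    | insert k S hk ih => rw [← ih, ← sum_chenProd_insert ρ hA hk]
  rw [Cdet_eq_sum_chenProd ρ, ← h Finset.univ, map_sum]
  simp only [chenProd_univ]

lemma Cdet_unitary (ρ : RealPart R C) [IsAddTorsionFree R] [IsAddTorsionFree C]
    {A U : Matrix (Fin n) (Fin n) R} (hA : Aᴴ = A) (hU : U * Uᴴ = 1) : Cdet (Uᴴ * A * U) = Cdet A := by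
  have hA' : (Uᴴ * A * U)ᴴ = Uᴴ * A * U := by
    simp only [Matrix.conjTranspose_mul, Matrix.conjTranspose_conjTranspose, hA, mul_assoc]
  rw [Cdet_eq_sum_weight ρ hA, Cdet_eq_sum_weight ρ hA', sum_weight_unitary ρ hA hU]

end Chen

/-! ### Dual quaternions -/

/-- Conjugation makes the dual quaternions a star ring. -/
instance : StarRing DualQuaternion where
  star_involutive q := TrivSqZeroExt.ext (star_star q.fst) (star_star q.snd)
  star_mul p q := TrivSqZeroExt.ext (star_mul p.fst q.fst) (by
    change star (p.fst * q.snd + p.snd * q.fst) =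
      star q.fst * star p.snd + star q.snd * star p.fst
    rw [star_add, star_mul, star_mul, add_comm])
  star_add p q := TrivSqZeroExt.ext (star_add p.fst q.fst) (star_add p.snd q.snd)

lemma isAddTorsionFree_quaternion : IsAddTorsionFree ℍ[ℝ] :=
  ⟨fun m hm a b h => by
    have h' : (m : ℝ) • a = (m : ℝ) • b := by simpa only [Nat.cast_smul_eq_nsmul] using h
    exact smul_right_injective _ (Nat.cast_ne_zero.2 hm) h'⟩

lemma isAddTorsionFree_dualNumber (K : Type*) [AddCommGroup K] [IsAddTorsionFree K] :
    IsAddTorsionFree (DualNumber K) :=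
  inferInstanceAs (IsAddTorsionFree (K × K))

lemma fst_toDQ (d : DualNumber ℝ) : TrivSqZeroExt.fst (toDQ d) = (d.fst : ℍ[ℝ]) := rfl

lemma snd_toDQ (d : DualNumber ℝ) : TrivSqZeroExt.snd (toDQ d) = (d.snd : ℍ[ℝ]) := rfl

lemma re_mul_comm_quaternion (a b : ℍ[ℝ]) : (a * b).re = (b * a).re := by
  rw [Quaternion.re_mul, Quaternion.re_mul]
  ring

lemma add_star_quaternion (a : ℍ[ℝ]) : a + star a = ((2 * a.re : ℝ) : ℍ[ℝ]) := by
  rw [Quaternion.self_add_star, Quaternion.coe_mul]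
  rfl

/-- The real part of dual quaternions, with values in the dual numbers. -/
def dualQuaternionRealPart : RealPart DualQuaternion (DualNumber ℝ) where
  re :=
    { toFun := dqRe
      map_zero' := rfl
      map_add' := fun _ _ => rfl }
  incl :=
    { toFun := toDQ
      map_zero' := TrivSqZeroExt.ext (by simp [fst_toDQ]) (by simp [snd_toDQ])
      map_one' := TrivSqZeroExt.ext (by simp [fst_toDQ]) (by simp [snd_toDQ])
      map_add' := fun _ _ => TrivSqZeroExt.ext (by simp [fst_toDQ]) (by simp [snd_toDQ])
      map_mul' := fun _ _ => TrivSqZeroExt.ext (by simp [fst_toDQ])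
        (by simp [fst_toDQ, snd_toDQ]) }
  re_mul_comm x y := by
    refine TrivSqZeroExt.ext (re_mul_comm_quaternion x.fst y.fst) ?_
    change (x.fst * y.snd + x.snd * y.fst).re = (y.fst * x.snd + y.snd * x.fst).re
    rw [Quaternion.re_add, Quaternion.re_add, re_mul_comm_quaternion x.fst,
      re_mul_comm_quaternion x.snd, add_comm]
  re_star x := TrivSqZeroExt.ext (Quaternion.re_star x.fst) (Quaternion.re_star x.snd)
  re_mul_incl x r := by
    refine TrivSqZeroExt.ext ?_ ?_
    · change (x.fst * (r.fst : ℍ[ℝ])).re = x.fst.re * r.fst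
      simp
    · change (x.fst * (r.snd : ℍ[ℝ]) + x.snd * (r.fst : ℍ[ℝ])).re
        = x.fst.re * r.snd + x.snd.re * r.fst
      simp
  add_star x := by
    rw [two_mul]
    refine TrivSqZeroExt.ext ?_ ?_
    · change x.fst + star x.fst = ((x.fst.re + x.fst.re : ℝ) : ℍ[ℝ])
      rw [add_star_quaternion, two_mul]
    · change x.snd + star x.snd = ((x.snd.re + x.snd.re : ℝ) : ℍ[ℝ])
      rw [add_star_quaternion, two_mul]

/-- The Chen determinant of a dual quaternion Hermitian matrix is invariant under unitary
similarity: `Cdet(U* A U) = Cdet(A)` for every dual quaternion unitary matrix `U`. -/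
theorem statement11 {n : ℕ} (A U : Matrix (Fin n) (Fin n) DualQuaternion)
    (hA : Aᴴ = A) (hU : Uᴴ * U = 1) :
    Cdet (Uᴴ * A * U) = Cdet A := by
  have := isAddTorsionFree_quaternion
  have : IsAddTorsionFree DualQuaternion := isAddTorsionFree_dualNumber ℍ[ℝ]
  have : IsAddTorsionFree (DualNumber ℝ) := isAddTorsionFree_dualNumber ℝ
  -- Matrix rings over the dual quaternions are Dedekind finite, so `U` is also right unitary.
  exact Cdet_unitary dualQuaternionRealPart hA (mul_eq_one_symm hU)

end DQPaper
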